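/- The weight-eight cusp form 𝒟̃ = 𝒟𝒬 on Γ₀(2) satisfies the third-order nonlinear ODE: for every τ ∈ ℍ, 16𝒟̃⁴(𝒟̃''')² − 30𝒟̃²𝒟̃'(4𝒟̃𝒟̃'' − 3(𝒟̃')²)𝒟̃''' + 32𝒟̃³(𝒟̃'')³ + 117𝒟̃²(𝒟̃')²(𝒟̃'')² − 8𝒟̃(16𝒟̃⁵ + 27(𝒟̃')⁴)𝒟̃'' + 81(𝒟̃')⁶ + 144𝒟̃⁵(𝒟̃')² = 0. -/

import Mathlib

open Complex

noncomputable section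

/-- The normalized derivative `F' = (2πi)⁻¹ dF/dτ`. -/
def nderiv (F : ℂ → ℂ) : ℂ → ℂ := fun τ => (2 * Real.pi * Complex.I)⁻¹ * deriv F τ

/-- `q = e^{2πiτ}`. -/
def qq (τ : ℂ) : ℂ := Complex.exp (2 * Real.pi * Complex.I * τ)

/-- The level-two Eisenstein series `𝒬(τ) = 1 + 16 Σ_{n≥1} (−1)ⁿ n³ qⁿ/(1−qⁿ)`. -/
def EQ : ℂ → ℂ := fun τ =>
  1 + 16 * ∑' n : ℕ, (-1 : ℂ) ^ (n + 1) * ((n : ℂ) + 1) ^ 3 * qq τ ^ (n + 1) / (1 - qq τ ^ (n + 1))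

/-- The level-two modular form `𝒫̃(τ) = 1 + 24 Σ_{n≥1} n qⁿ/(1+qⁿ)`. -/
def EPt : ℂ → ℂ := fun τ =>
  1 + 24 * ∑' n : ℕ, ((n : ℂ) + 1) * qq τ ^ (n + 1) / (1 + qq τ ^ (n + 1))

/-- The weight-four modular form `𝒟 = (𝒫̃² − 𝒬)/64` on `Γ₀(2)`. -/
def ED : ℂ → ℂ := fun τ => (EPt τ ^ 2 - EQ τ) / 64

/-- The weight-eight cusp form `𝒟̃ = 𝒟𝒬` on `Γ₀(2)`. -/
def EDt : ℂ → ℂ := fun τ => ED τ * EQ τ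

section helpers
open UpperHalfPlane hiding I
open scoped Manifold MatrixGroups ModularForm Topology
open Filter Asymptotics

/-- `f` is (on the upper half plane) an analytic function of `q` with value `c` at `q = 0`. -/
def QV (f : ℂ → ℂ) (c : ℂ) : Prop :=
  ∃ F : ℂ → ℂ, DifferentiableOn ℂ F (Metric.ball 0 1) ∧ F 0 = c ∧ ∀ τ : ℂ, 0 < τ.im → f τ = F (qq τ)

lemma qq_norm_lt {τ : ℂ} (h : 0 < τ.im) : ‖qq τ‖ < 1 := by
  have := UpperHalfPlane.norm_exp_two_pi_I_lt_one ⟨τ, h⟩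
  simpa [qq] using this

lemma qq_mem {τ : ℂ} (h : 0 < τ.im) : qq τ ∈ Metric.ball (0 : ℂ) 1 := by
  simpa using qq_norm_lt h

lemma qq_add_one (τ : ℂ) : qq (τ + 1) = qq τ := by
  simp only [qq, mul_add, mul_one, Complex.exp_add, Complex.exp_two_pi_mul_I]

lemma qq_two (τ : ℂ) : qq (2 * τ) = qq τ ^ 2 := by
  simp only [qq, ← Complex.exp_nat_mul]
  congr 1; push_cast; ring

lemma qq_hasDerivAt (τ : ℂ) : HasDerivAt qq (2 * Real.pi * Complex.I * qq τ) τ := by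
  have h : HasDerivAt (fun τ : ℂ => 2 * Real.pi * Complex.I * τ) (2 * Real.pi * Complex.I) τ := by
    simpa using (hasDerivAt_id τ).const_mul (2 * Real.pi * Complex.I : ℂ)
  exact h.cexp.congr_deriv (by rw [qq]; ring)

lemma tpi_ne : (2 * Real.pi * Complex.I : ℂ) ≠ 0 := Complex.two_pi_I_ne_zero

lemma im_nhds {τ : ℂ} (h : 0 < τ.im) : ∀ᶠ z in 𝓝 τ, 0 < z.im :=
  (isOpen_lt continuous_const Complex.continuous_im).mem_nhds h

lemma QV.const (c : ℂ) : QV (fun _ => c) c := ⟨fun _ => c, by fun_prop, rfl, fun _ _ => rfl⟩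

lemma QV.add {f g : ℂ → ℂ} {a b : ℂ} (hf : QV f a) (hg : QV g b) : QV (fun τ => f τ + g τ) (a + b) := by
  obtain ⟨F, h1, h2, h3⟩ := hf
  obtain ⟨G, k1, k2, k3⟩ := hg
  exact ⟨fun q => F q + G q, h1.add k1, by simp [h2, k2], fun τ h => by simp [h3 τ h, k3 τ h]⟩

lemma QV.mul {f g : ℂ → ℂ} {a b : ℂ} (hf : QV f a) (hg : QV g b) : QV (fun τ => f τ * g τ) (a * b) := by
  obtain ⟨F, h1, h2, h3⟩ := hf
  obtain ⟨G, k1, k2, k3⟩ := hg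
  exact ⟨fun q => F q * G q, h1.mul k1, by simp [h2, k2], fun τ h => by simp [h3 τ h, k3 τ h]⟩

lemma QV.sub {f g : ℂ → ℂ} {a b : ℂ} (hf : QV f a) (hg : QV g b) : QV (fun τ => f τ - g τ) (a - b) := by
  obtain ⟨F, h1, h2, h3⟩ := hf
  obtain ⟨G, k1, k2, k3⟩ := hg
  exact ⟨fun q => F q - G q, h1.sub k1, by simp [h2, k2], fun τ h => by simp [h3 τ h, k3 τ h]⟩

lemma QV.two {f : ℂ → ℂ} {a : ℂ} (hf : QV f a) : QV (fun τ => f (2 * τ)) a := by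
  obtain ⟨F, h1, h2, h3⟩ := hf
  refine ⟨fun q => F (q ^ 2), ?_, by simp [h2], fun τ h => ?_⟩
  · refine h1.comp (by fun_prop) fun q hq => ?_
    simp only [Metric.mem_ball, dist_zero_right, norm_pow] at hq ⊢
    exact pow_lt_one₀ (norm_nonneg _) hq two_ne_zero
  · show f (2 * τ) = F (qq τ ^ 2)
    rw [h3 _ (by simpa using h), qq_two]

lemma QV.hasDerivAt {f : ℂ → ℂ} {a : ℂ} (hf : QV f a) {τ : ℂ} (h : 0 < τ.im) :
    HasDerivAt f (2 * Real.pi * Complex.I * nderiv f τ) τ := by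
  obtain ⟨F, h1, h2, h3⟩ := hf
  have hd : DifferentiableAt ℂ f τ := by
    have hF : DifferentiableAt ℂ F (qq τ) :=
      h1.differentiableAt (Metric.isOpen_ball.mem_nhds (qq_mem h))
    have : DifferentiableAt ℂ (fun z => F (qq z)) τ :=
      hF.comp τ (qq_hasDerivAt τ).differentiableAt
    refine this.congr_of_eventuallyEq ?_
    filter_upwards [im_nhds h] with z hz using h3 z hz
  have := hd.hasDerivAt
  rwa [nderiv, mul_inv_cancel_left₀ tpi_ne]

lemma nderiv_eq {f : ℂ → ℂ} {d τ : ℂ} (h : HasDerivAt f (2 * Real.pi * Complex.I * d) τ) :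
    nderiv f τ = d := by
  rw [nderiv, h.deriv, inv_mul_cancel_left₀ tpi_ne]

lemma nderiv_congr {f g : ℂ → ℂ} (hfg : ∀ τ : ℂ, 0 < τ.im → f τ = g τ) {τ : ℂ} (h : 0 < τ.im) :
    nderiv f τ = nderiv g τ := by
  have : f =ᶠ[𝓝 τ] g := by
    filter_upwards [im_nhds h] with z hz using hfg z hz
  rw [nderiv, nderiv, this.deriv_eq]

lemma QV.nd {f : ℂ → ℂ} {a : ℂ} (hf : QV f a) : QV (nderiv f) 0 := by
  obtain ⟨F, h1, h2, h3⟩ := hf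
  refine ⟨fun q => q * deriv F q, ?_, by simp, fun τ h => ?_⟩
  · exact differentiableOn_id.mul (h1.deriv Metric.isOpen_ball)
  · have hF : DifferentiableAt ℂ F (qq τ) :=
      h1.differentiableAt (Metric.isOpen_ball.mem_nhds (qq_mem h))
    rw [nderiv_congr h3 h]
    apply nderiv_eq
    exact (hF.hasDerivAt.comp τ (qq_hasDerivAt τ)).congr_deriv (by ring)

lemma QV.add_one {f : ℂ → ℂ} {a : ℂ} (hf : QV f a) {τ : ℂ} (h : 0 < τ.im) : f (τ + 1) = f τ := by
  obtain ⟨F, h1, h2, h3⟩ := hf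
  rw [h3 _ (by simpa using h), h3 _ h, qq_add_one]

lemma QV.analytic {f : ℂ → ℂ} {a : ℂ} (hf : QV f a) : DifferentiableOn ℂ f {z | 0 < z.im} :=
  fun _ hz => (hf.hasDerivAt hz).differentiableAt.differentiableWithinAt

lemma qParam_eq (τ : ℂ) : Function.Periodic.qParam 1 τ = qq τ := by
  simp [Function.Periodic.qParam, qq]

lemma QV_of_hasSum {f : ℍ → ℂ} {c : ℕ → ℂ} (hol : MDiff f)
    (hs : ∀ τ : ℍ, HasSum (fun m ↦ c m • Function.Periodic.qParam 1 τ ^ m) (f τ)) :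
    QV (f ∘ ofComplex) (c 0) := by
  have hper : Function.Periodic (f ∘ ofComplex) (1 : ℝ) := by
    intro z
    by_cases hz : 0 < z.im
    · have hz' : 0 < (z + (1 : ℝ)).im := by simpa using hz
      simp only [Function.comp_apply, ofComplex_apply_of_im_pos hz, ofComplex_apply_of_im_pos hz']
      have e1 := hs ⟨z, hz⟩
      have e2 := hs ⟨_, hz'⟩
      simp only [qParam_eq] at e1 e2
      refine e2.unique ?_
      convert e1 using 4
      simpa using qq_add_one z
    · have hz' : ¬ 0 < (z + (1 : ℝ)).im := by simpa using hz
      simp only [Function.comp_apply, ofComplex_apply_of_im_nonpos (not_lt.1 hz),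
        ofComplex_apply_of_im_nonpos (not_lt.1 hz')]
  have hb := isBoundedAtImInfty_of_hasSum_qExpansion one_pos hs
  have ha := analyticAt_cuspFunction_zero one_pos hper hol hb
  have hp := hasFPowerSeriesOnBall_cuspFunction one_pos ha hs
  refine ⟨cuspFunction 1 f, differentiableOn_cuspFunction_ball one_pos hper hol hb, ?_, ?_⟩
  · have := hp.coeff_zero (fun _ => 0)
    simpa using this.symm
  · intro τ h
    have := eq_cuspFunction ⟨τ, h⟩ one_ne_zero hper
    simp only [qParam_eq] at this
    simpa [ofComplex_apply_of_im_pos h] using this.symm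

/-- `E₂` as a function on `ℂ`. -/
def A2 : ℂ → ℂ := EisensteinSeries.E2 ∘ ofComplex

/-- `E₄` as a function on `ℂ`. -/
def A4 : ℂ → ℂ := (ModularForm.E (by norm_num : 3 ≤ 4)) ∘ ofComplex

lemma A2_QV : QV A2 1 := by
  have : QV A2 _ := QV_of_hasSum (c := fun m : ℕ ↦ (if m = 0 then 1 else
    -24 * (ArithmeticFunction.sigma 1 m : ℂ) : ℂ)) E2_mdifferentiable fun τ => by
      simpa only [Function.Periodic.qParam, ofReal_one, div_one] using
        EisensteinSeries.hasSum_qExpansion_E2 (z := τ)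
  simpa using this

lemma MF_QV {k : ℤ} (f : ModularForm 𝒮ℒ k) :
    QV (f ∘ ofComplex) ((qExpansion 1 f).coeff 0) := by
  refine QV_of_hasSum (c := fun m => (qExpansion 1 f).coeff m) f.holo' fun τ => ?_
  have := ModularForm.hasSum_qExpansion f one_pos one_mem_strictPeriods_SL τ
  exact this

lemma A4_QV : QV A4 1 := by
  have := MF_QV (ModularForm.E (by norm_num : 3 ≤ 4))
  rwa [EisensteinSeries.E_qExpansion_coeff_zero _ (by decide)] at this

lemma im_S {z : ℂ} (hz : 0 < z.im) : 0 < (-1 / z).im := by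
  have := UpperHalfPlane.im_inv_neg_coe_pos ⟨z, hz⟩
  rwa [show -1 / z = (-z)⁻¹ by rw [inv_neg, neg_div, one_div]]

lemma S_smul_eq {z : ℂ} (hz : 0 < z.im) :
    ModularGroup.S • (⟨z, hz⟩ : ℍ) = (⟨-1 / z, im_S hz⟩ : ℍ) := by
  ext
  rw [UpperHalfPlane.modular_S_smul]
  show (-z)⁻¹ = -1 / z
  rw [inv_neg, neg_div, one_div]

lemma A2_S {z : ℂ} (hz : 0 < z.im) :
    A2 (-1 / z) = z ^ 2 * A2 z + 12 * (2 * Real.pi * Complex.I)⁻¹ * z := by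
  have h := congrFun (EisensteinSeries.E2_slash_action ModularGroup.S) ⟨z, hz⟩
  rw [ModularForm.SL_slash_apply, ModularGroup.denom_S] at h
  have hz0 : z ≠ 0 := by rintro rfl; simp at hz
  have hpi : (Real.pi : ℂ) ≠ 0 := by simp
  simp only [S_smul_eq, Pi.sub_apply, Pi.smul_apply,
    EisensteinSeries.D2_S, riemannZeta_two, smul_eq_mul] at h
  simp only [A2, Function.comp_apply, ofComplex_apply_of_im_pos hz,
    ofComplex_apply_of_im_pos (im_S hz)]
  rw [show (-2 : ℤ) = -((2 : ℕ) : ℤ) from rfl, zpow_neg, zpow_natCast,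
    mul_inv_eq_iff_eq_mul₀ (pow_ne_zero _ hz0)] at h
  rw [h]
  have : Complex.I ≠ 0 := Complex.I_ne_zero
  have h2 : Complex.I ^ 2 = -1 := Complex.I_sq
  field_simp
  linear_combination (-12) * h2

lemma A4_S {z : ℂ} (hz : 0 < z.im) : A4 (-1 / z) = z ^ 4 * A4 z := by
  have h : (⇑(ModularForm.E (by norm_num : 3 ≤ 4)) : ℍ → ℂ) ∣[((4 : ℕ) : ℤ)] ModularGroup.S =
      ⇑(ModularForm.E (by norm_num : 3 ≤ 4)) :=
    SlashInvariantFormClass.slash_action_eq (ModularForm.E (by norm_num : 3 ≤ 4)) _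
      ⟨ModularGroup.S, rfl⟩
  have h := congrFun h ⟨z, hz⟩
  have hz0 : z ≠ 0 := by rintro rfl; simp at hz
  rw [ModularForm.SL_slash_apply, ModularGroup.denom_S] at h
  simp only [S_smul_eq] at h
  simp only [A4, Function.comp_apply, ofComplex_apply_of_im_pos hz,
    ofComplex_apply_of_im_pos (im_S hz)]
  rw [zpow_neg, zpow_natCast, mul_inv_eq_iff_eq_mul₀ (pow_ne_zero _ hz0)] at h
  rw [h, mul_comm]

lemma A2_lambert {τ : ℂ} (h : 0 < τ.im) :
    A2 τ = 1 - 24 * ∑' n : ℕ, ((n : ℂ) + 1) * qq τ ^ (n + 1) / (1 - qq τ ^ (n + 1)) := by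
  simp only [A2, Function.comp_apply, ofComplex_apply_of_im_pos h]
  rw [EisensteinSeries.E2_eq_tsum_cexp]
  have := tsum_pow_div_one_sub_eq_tsum_sigma (qq_norm_lt h) 1
  have h2 := tsum_pnat_eq_tsum_succ (f := fun n : ℕ => (n : ℂ) ^ 1 * qq τ ^ n / (1 - qq τ ^ n))
  simp only [qq] at *
  rw [← this, h2]
  simp

lemma A4_lambert {τ : ℂ} (h : 0 < τ.im) :
    A4 τ = 1 + 240 * ∑' n : ℕ, ((n : ℂ) + 1) ^ 3 * qq τ ^ (n + 1) / (1 - qq τ ^ (n + 1)) := by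
  simp only [A4, Function.comp_apply, ofComplex_apply_of_im_pos h]
  rw [EisensteinSeries.q_expansion_bernoulli _ (by decide)]
  have := tsum_pow_div_one_sub_eq_tsum_sigma (qq_norm_lt h) 3
  have h2 := tsum_pnat_eq_tsum_succ (f := fun n : ℕ => (n : ℂ) ^ 3 * qq τ ^ n / (1 - qq τ ^ n))
  simp only [qq, zpow_natCast] at *
  rw [← this, h2, bernoulli_eq_bernoulli'_of_ne_one (by norm_num), bernoulli'_four]
  push_cast
  ring

lemma one_sub_pow_ne {q : ℂ} (hq : ‖q‖ < 1) (n : ℕ) : 1 - q ^ (n + 1) ≠ 0 := by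
  intro h
  have : ‖q ^ (n + 1)‖ < 1 := by
    rw [norm_pow]; exact pow_lt_one₀ (norm_nonneg _) hq (by omega)
  rw [← sub_eq_zero.1 h] at this
  simp at this

lemma one_add_pow_ne {q : ℂ} (hq : ‖q‖ < 1) (n : ℕ) : 1 + q ^ (n + 1) ≠ 0 := by
  intro h
  have : ‖q ^ (n + 1)‖ < 1 := by
    rw [norm_pow]; exact pow_lt_one₀ (norm_nonneg _) hq (by omega)
  rw [← neg_eq_of_add_eq_zero_right h] at this
  simp at this

lemma lambert_summable {q : ℂ} (hq : ‖q‖ < 1) (k : ℕ) :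
    Summable fun n : ℕ => ((n : ℂ) + 1) ^ k * q ^ (n + 1) / (1 - q ^ (n + 1)) := by
  have h1 : Summable fun n : ℕ => ‖(n : ℂ) ^ k * q ^ n‖ :=
    summable_norm_pow_mul_geometric_of_norm_lt_one k hq
  have h2 := ((summable_nat_add_iff 1).2 h1).mul_right (1 - ‖q‖)⁻¹
  refine Summable.of_norm_bounded h2 fun n => ?_
  rw [norm_div, div_eq_mul_inv]
  push_cast
  gcongr ?_ * ?_
  refine inv_anti₀ (by linarith) ?_
  have : ‖q ^ (n + 1)‖ ≤ ‖q‖ := by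
    rw [norm_pow]; exact pow_le_of_le_one (norm_nonneg _) hq.le (by omega)
  have h3 := norm_sub_norm_le (1 : ℂ) (q ^ (n + 1))
  rw [norm_one] at h3
  linarith

lemma EPt_eq {τ : ℂ} (h : 0 < τ.im) : EPt τ = 2 * A2 (2 * τ) - A2 τ := by
  have h' : 0 < (2 * τ).im := by simpa using h
  have hq := qq_norm_lt h
  have hq2 := qq_norm_lt h'
  have s1 := lambert_summable hq 1
  have s2 := lambert_summable hq2 1
  rw [A2_lambert h, A2_lambert h', EPt]
  simp only [pow_one] at s1 s2
  have : ∑' n : ℕ, ((n : ℂ) + 1) * qq τ ^ (n + 1) / (1 + qq τ ^ (n + 1)) =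
      ∑' n : ℕ, ((n : ℂ) + 1) * qq τ ^ (n + 1) / (1 - qq τ ^ (n + 1)) -
      2 * ∑' n : ℕ, ((n : ℂ) + 1) * qq (2 * τ) ^ (n + 1) / (1 - qq (2 * τ) ^ (n + 1)) := by
    rw [← tsum_mul_left, ← s1.tsum_sub (s2.mul_left 2)]
    congr 1
    ext n
    have hx : qq (2 * τ) ^ (n + 1) = (qq τ ^ (n + 1)) ^ 2 := by rw [qq_two]; ring
    rw [hx]
    have a := one_sub_pow_ne hq n
    have b := one_add_pow_ne hq n
    generalize qq τ ^ (n + 1) = x at *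
    have c : 1 - x ^ 2 ≠ 0 := by
      rw [show 1 - x ^ 2 = (1 - x) * (1 + x) by ring]; exact mul_ne_zero a b
    field_simp
    ring
  rw [this]
  ring

lemma tsum_alt {f : ℕ → ℂ} (hf : Summable f) :
    ∑' n : ℕ, (-1 : ℂ) ^ (n + 1) * f n = - ∑' n, f n + 2 * ∑' k : ℕ, f (2 * k + 1) := by
  have e1 : Function.Injective (fun k : ℕ => 2 * k) := fun a b h => by simpa using h
  have e2 : Function.Injective (fun k : ℕ => 2 * k + 1) := fun a b h => by simpa using h
  have hg : Summable fun n : ℕ => (-1 : ℂ) ^ (n + 1) * f n := by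
    refine Summable.of_norm_bounded hf.norm fun n => ?_
    rw [norm_mul]; simp
  have t1 := tsum_even_add_odd (f := f) (hf.comp_injective e1) (hf.comp_injective e2)
  have t2 := tsum_even_add_odd (f := fun n : ℕ => (-1 : ℂ) ^ (n + 1) * f n)
    (hg.comp_injective e1) (hg.comp_injective e2)
  have o1 : ∀ k : ℕ, (-1 : ℂ) ^ (2 * k + 1) = -1 := fun k => by simp [pow_succ, pow_mul]
  have o2 : ∀ k : ℕ, (-1 : ℂ) ^ (2 * k + 1 + 1) = 1 := fun k => by simp [pow_succ, pow_mul]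
  simp only [o1, o2, neg_mul, one_mul, tsum_neg] at t2
  rw [← t2, ← t1]
  ring

lemma EQ_eq {τ : ℂ} (h : 0 < τ.im) : EQ τ = (16 * A4 (2 * τ) - A4 τ) / 15 := by
  have h' : 0 < (2 * τ).im := by simpa using h
  have hq := qq_norm_lt h
  have hq2 := qq_norm_lt h'
  have s1 := lambert_summable hq 3
  have s2 := lambert_summable hq2 3
  rw [A4_lambert h, A4_lambert h', EQ]
  have e3 : ∀ n : ℕ, (-1 : ℂ) ^ (n + 1) * ((n : ℂ) + 1) ^ 3 * qq τ ^ (n + 1) / (1 - qq τ ^ (n + 1))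
     = (-1 : ℂ) ^ (n + 1) * (((n : ℂ) + 1) ^ 3 * qq τ ^ (n + 1) / (1 - qq τ ^ (n + 1))) := by
    intro n; ring
  simp only [e3]
  rw [tsum_alt s1]
  have t3 : ∑' k : ℕ, (((2 * k + 1 : ℕ) : ℂ) + 1) ^ 3 * qq τ ^ (2 * k + 1 + 1) /
      (1 - qq τ ^ (2 * k + 1 + 1)) =
      8 * ∑' n : ℕ, ((n : ℂ) + 1) ^ 3 * qq (2 * τ) ^ (n + 1) / (1 - qq (2 * τ) ^ (n + 1)) := by
    rw [← tsum_mul_left]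
    congr 1
    ext n
    rw [qq_two, ← pow_mul (qq τ) 2, show 2 * (n + 1) = 2 * n + 1 + 1 by ring]
    push_cast
    ring
  rw [t3]
  ring

lemma QV.decay {f : ℂ → ℂ} (hf : QV f 0) :
    ∃ C B : ℝ, 0 ≤ C ∧ 0 < B ∧ ∀ τ : ℂ, B ≤ τ.im → ‖f τ‖ ≤ C * Real.exp (-2 * Real.pi * τ.im) := by
  obtain ⟨F, h1, h2, h3⟩ := hf
  have hd : DifferentiableAt ℂ F 0 := h1.differentiableAt (Metric.ball_mem_nhds 0 one_pos)
  have hO := hd.isBigO_sub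
  simp only [h2, sub_zero] at hO
  obtain ⟨C, hC, hb⟩ := hO.exists_nonneg
  rw [isBigOWith_iff, Metric.eventually_nhds_iff] at hb
  obtain ⟨ε, he, hb⟩ := hb
  have hn : ∀ τ : ℂ, ‖qq τ‖ = Real.exp (-2 * Real.pi * τ.im) := by
    intro τ
    rw [qq, Complex.norm_exp]
    congr 1
    simp
  have ht : Tendsto (fun x : ℝ => Real.exp (-2 * Real.pi * x)) atTop (𝓝 0) := by
    refine Real.tendsto_exp_atBot.comp ?_
    exact tendsto_id.const_mul_atTop_of_neg (by have := Real.pi_pos; linarith)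
  obtain ⟨B, hB⟩ := (eventually_atTop.1 (ht.eventually (gt_mem_nhds he)))
  refine ⟨C, max B 1, hC, by positivity, fun τ h => ?_⟩
  have h' : 0 < τ.im := lt_of_lt_of_le (by positivity) h
  rw [h3 τ h', ← hn]
  apply hb
  rw [dist_zero_right, hn]
  exact hB _ (le_trans (le_max_left _ _) h)

/-- The norm of `f` from level two to level one. -/
def NN (f : ℂ → ℂ) : ℂ → ℂ := fun z => f z * f (z / 2) * f ((z + 1) / 2)

lemma im_half {z : ℂ} (hz : 0 < z.im) : 0 < (z / 2).im := by
  rw [show z / 2 = ((1 / 2 : ℝ) : ℂ) * z by push_cast; ring, Complex.im_ofReal_mul]; positivity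

lemma NN_add_one {f : ℂ → ℂ} {a : ℂ} (hf : QV f a) {z : ℂ} (hz : 0 < z.im) :
    NN f (z + 1) = NN f z := by
  have h1 := hf.add_one hz
  have h2 := hf.add_one (im_half hz)
  simp only [NN]
  rw [h1, show (z + 1 + 1) / 2 = z / 2 + 1 by ring, h2]
  ring

lemma NN_S {f : ℂ → ℂ} {a c : ℂ} {k : ℕ} (hf : QV f a) (hc : c ^ 2 = 2 ^ k)
    (hF : ∀ z : ℂ, 0 < z.im → f (-1 / (2 * z)) = c * z ^ k * f z) {z : ℂ} (hz : 0 < z.im) :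
    NN f (-1 / z) = z ^ (3 * k) * NN f z := by
  have hz0 : z ≠ 0 := by rintro rfl; simp at hz
  have hz1 : 0 < (z - 1).im := by simpa using hz
  have hz10 : z - 1 ≠ 0 := by intro h; rw [h] at hz1; simp at hz1
  have hc0 : c ≠ 0 := by
    rintro rfl
    have : (2 : ℂ) ^ k ≠ 0 := pow_ne_zero _ two_ne_zero
    apply this; rw [← hc]; simp
  have e1 := hF _ (im_half hz)
  rw [show -1 / (2 * (z / 2)) = -1 / z by field_simp] at e1
  have e2 := hF _ hz
  have hu : 0 < ((-1 / z + 1) / 2).im := by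
    apply im_half; simpa using im_S hz
  have e3 := hF _ hu
  have e4 := hF _ (im_half hz1)
  have e5 : f (-1 / (2 * ((z - 1) / 2))) = f (-1 / (2 * ((-1 / z + 1) / 2))) := by
    have hw : 0 < (-1 / (2 * ((-1 / z + 1) / 2))).im := by
      have : 0 < (2 * ((-1 / z + 1) / 2)).im := by
        rw [mul_div_cancel₀ _ two_ne_zero]; simpa using im_S hz
      exact im_S this
    rw [← hf.add_one hw]
    congr 1
    have : -1 / z + 1 ≠ 0 := by
      rw [show -1 / z + 1 = (z - 1) / z by field_simp; ring]
      exact div_ne_zero hz10 hz0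
    have h3 : -1 + z ≠ 0 := by rwa [neg_add_eq_sub]
    field_simp
    ring
  have e6 := hf.add_one (im_half hz1)
  rw [show (z - 1) / 2 + 1 = (z + 1) / 2 by ring] at e6
  rw [e5, e3, ← e6] at e4
  have e7 : f ((-1 / z + 1) / 2) = z ^ k * f ((z + 1) / 2) := by
    have hv : ((z - 1) / 2) ^ k ≠ 0 := pow_ne_zero _ (div_ne_zero hz10 two_ne_zero)
    rw [show (-1 / z + 1) / 2 = ((z - 1) / 2) / z by field_simp; ring] at e4 ⊢
    rw [div_pow ((z - 1) / 2) z] at e4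
    have : z ^ k ≠ 0 := pow_ne_zero _ hz0
    generalize f ((z - 1) / 2 / z) = X at *
    generalize ((z - 1) / 2) ^ k = Y at *
    generalize z ^ k = Z at *
    field_simp at e4
    linear_combination e4
  simp only [NN]
  rw [e1, e7, show -1 / z / 2 = -1 / (2 * z) by field_simp, e2, div_pow, pow_mul', pow_succ (z ^ k)]
  have : (2 : ℂ) ^ k ≠ 0 := pow_ne_zero _ two_ne_zero
  field_simp
  rw [hc]

lemma NN_diff {f : ℂ → ℂ} {a : ℂ} (hf : QV f a) : DifferentiableOn ℂ (NN f) {z | 0 < z.im} := by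
  refine (hf.analytic.mul (hf.analytic.comp (g := f) (f := fun z : ℂ => z / 2) (by fun_prop) ?_)).mul
    (hf.analytic.comp (g := f) (f := fun z : ℂ => (z + 1) / 2) (by fun_prop) ?_)
  · exact fun z hz => im_half hz
  · intro z hz
    apply im_half
    simpa using hz

lemma NN_decay {f : ℂ → ℂ} (hf : QV f 0) :
    (fun τ : ℍ => NN f τ) =O[atImInfty] fun τ => Real.exp (-4 * Real.pi * τ.im) := by
  obtain ⟨C, B, hC, hB, h⟩ := hf.decay
  refine .of_bound (C ^ 3) ?_
  filter_upwards [(atImInfty_mem _).2 ⟨2 * B, fun z hz => hz⟩] with τ hτ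
  have hτ : 2 * B ≤ (τ : ℂ).im := hτ
  have i2 : ((τ : ℂ) / 2).im = (τ : ℂ).im / 2 := by
    rw [show (τ : ℂ) / 2 = ((1 / 2 : ℝ) : ℂ) * τ by push_cast; ring, Complex.im_ofReal_mul]; ring
  have i3 : (((τ : ℂ) + 1) / 2).im = (τ : ℂ).im / 2 := by
    rw [show ((τ : ℂ) + 1) / 2 = ((1 / 2 : ℝ) : ℂ) * (τ + 1) by push_cast; ring,
      Complex.im_ofReal_mul, Complex.add_im, Complex.one_im]
    ring
  have h1 := h τ (by linarith)
  have h2 := h (τ / 2) (by rw [i2]; linarith)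
  have h3 := h ((τ + 1) / 2) (by rw [i3]; linarith)
  rw [i2] at h2
  rw [i3] at h3
  simp only [NN, norm_mul]
  refine (mul_le_mul (mul_le_mul h1 h2 (norm_nonneg _) (by positivity)) h3 (norm_nonneg _)
    (by positivity)).trans (le_of_eq ?_)
  rw [Real.norm_of_nonneg (Real.exp_nonneg _)]
  rw [show -4 * Real.pi * τ.im = -2 * Real.pi * (τ : ℂ).im + -2 * Real.pi * ((τ : ℂ).im / 2) +
    -2 * Real.pi * ((τ : ℂ).im / 2) by rw [UpperHalfPlane.coe_im]; ring, Real.exp_add, Real.exp_add]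
  ring

lemma NN_slash_S {f : ℂ → ℂ} {a c : ℂ} {k : ℕ} (hf : QV f a) (hc : c ^ 2 = 2 ^ k)
    (hF : ∀ z : ℂ, 0 < z.im → f (-1 / (2 * z)) = c * z ^ k * f z) :
    (fun τ : ℍ => NN f τ) ∣[((3 * k : ℕ) : ℤ)] ModularGroup.S = fun τ : ℍ => NN f τ := by
  ext ⟨z, hz⟩
  rw [ModularForm.SL_slash_apply, ModularGroup.denom_S]
  simp only [S_smul_eq]
  have hz0 : z ≠ 0 := by rintro rfl; simp at hz
  rw [NN_S hf hc hF hz, zpow_neg, zpow_natCast, mul_inv_eq_iff_eq_mul₀ (pow_ne_zero _ hz0), mul_comm]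

lemma NN_slash_T {f : ℂ → ℂ} {a : ℂ} (k : ℤ) (hf : QV f a) :
    (fun τ : ℍ => NN f τ) ∣[k] ModularGroup.T = fun τ : ℍ => NN f τ := by
  ext z
  rw [ModularForm.SL_slash_apply, ModularGroup.denom_apply]
  have : ((ModularGroup.T • z : ℍ) : ℂ) = z + 1 := by
    rw [UpperHalfPlane.modular_T_smul]; simp [add_comm]
  rw [this, NN_add_one hf z.2]
  simp [ModularGroup.T]

/-- The norm as a cusp form. -/
def NC {f : ℂ → ℂ} {c : ℂ} {k : ℕ} (hf : QV f 0) (hc : c ^ 2 = 2 ^ k)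
    (hF : ∀ z : ℂ, 0 < z.im → f (-1 / (2 * z)) = c * z ^ k * f z) :
    CuspForm 𝒮ℒ ((3 * k : ℕ) : ℤ) where
  toFun := fun τ : ℍ => NN f τ
  slash_action_eq' A hA := by
    obtain ⟨A, rfl⟩ := hA
    exact SlashInvariantForm.slash_action_generators_SL2Z (NN_slash_S hf hc hF) (NN_slash_T _ hf) A
  holo' := by
    rw [UpperHalfPlane.mdifferentiable_iff]
    refine (NN_diff hf).congr fun z hz ↦ ?_
    simp [ofComplex_apply_of_im_pos hz]
  zero_at_cusps' hc' := by
    rw [Subgroup.IsArithmetic.isCusp_iff_isCusp_SL2Z] at hc'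
    rw [OnePoint.isZeroAt_iff_forall_SL2Z hc']
    intro γ _
    rw [SlashInvariantForm.slash_action_generators_SL2Z (NN_slash_S hf hc hF) (NN_slash_T _ hf)]
    refine (NN_decay hf).trans_tendsto ?_
    refine Real.tendsto_exp_atBot.comp ?_
    exact (show Tendsto UpperHalfPlane.im atImInfty atTop from tendsto_comap).const_mul_atTop_of_neg (by have := Real.pi_pos; linarith)

lemma NN_zero {f : ℂ → ℂ} {c : ℂ} {k : ℕ} (hf : QV f 0) (hc : c ^ 2 = 2 ^ k) (hk : k < 8)
    (hF : ∀ z : ℂ, 0 < z.im → f (-1 / (2 * z)) = c * z ^ k * f z) {z : ℂ} (hz : 0 < z.im) :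
    NN f z = 0 := by
  let g := CuspForm.discriminantEquiv (NC hf hc hF)
  have hg : ∀ τ : ℍ, g τ = NN f τ / ModularForm.discriminant τ := fun τ => rfl
  have hgz : IsZeroAtImInfty g := by
    have h1 : (fun τ : ℍ => (ModularForm.discriminant τ)⁻¹) =O[atImInfty]
        fun τ => (Real.exp (-2 * Real.pi * τ.im))⁻¹ :=
      ModularForm.exp_isBigO_discriminant.inv_rev
        (Eventually.of_forall fun τ h => absurd h (Real.exp_ne_zero _))
    have h2 := (NN_decay hf).mul h1
    refine (h2.congr_left fun τ => ?_).trans_tendsto ?_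
    · rw [hg, div_eq_mul_inv]
    · have h3 : ∀ τ : ℍ, Real.exp (-4 * Real.pi * τ.im) * (Real.exp (-2 * Real.pi * τ.im))⁻¹ =
          Real.exp (-2 * Real.pi * τ.im) := by
        intro τ
        rw [← Real.exp_neg, ← Real.exp_add]
        congr 1
        ring
      simp only [h3]
      refine Real.tendsto_exp_atBot.comp ?_
      exact (show Tendsto UpperHalfPlane.im atImInfty atTop from tendsto_comap).const_mul_atTop_of_neg (by have := Real.pi_pos; linarith)
  let g' : CuspForm 𝒮ℒ (((3 * k : ℕ) : ℤ) - 12) :=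
    { g with
      zero_at_cusps' := fun hc' => by
        rw [Subgroup.IsArithmetic.isCusp_iff_isCusp_SL2Z] at hc'
        rw [OnePoint.isZeroAt_iff_forall_SL2Z hc']
        intro γ _
        have h := SlashInvariantFormClass.slash_action_eq g _ ⟨γ, rfl⟩
        exact h.symm ▸ hgz }
  have h0 : g' = 0 :=
    rank_zero_iff_forall_zero.1 (CuspForm.rank_eq_zero_of_weight_lt_twelve (by lia)) g'
  have h1 : g ⟨z, hz⟩ = 0 := congrArg (fun h : CuspForm 𝒮ℒ _ => h ⟨z, hz⟩) h0
  rw [hg] at h1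
  exact (div_eq_zero_iff.1 h1).resolve_right (ModularForm.discriminant_ne_zero _)

lemma fricke_zero {f : ℂ → ℂ} {k : ℕ} (c : ℂ) (hf : QV f 0) (hc : c ^ 2 = 2 ^ k) (hk : k < 8)
    (hF : ∀ z : ℂ, 0 < z.im → f (-1 / (2 * z)) = c * z ^ k * f z) {z : ℂ} (hz : 0 < z.im) :
    f z = 0 := by
  have hN : ∀ w ∈ {w : ℂ | 0 < w.im}, (f w * f (w / 2)) * f ((w + 1) / 2) = 0 :=
    fun w hw => NN_zero hf hc hk hF hw
  have ho : IsOpen {w : ℂ | 0 < w.im} := isOpen_lt continuous_const Complex.continuous_im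
  have hconn : IsPreconnected {w : ℂ | 0 < w.im} := (convex_halfSpace_im_gt 0).isPreconnected
  have m1 : ∀ w ∈ {w : ℂ | 0 < w.im}, w / 2 ∈ {w : ℂ | 0 < w.im} := fun w hw => im_half hw
  have m2 : ∀ w ∈ {w : ℂ | 0 < w.im}, (w + 1) / 2 ∈ {w : ℂ | 0 < w.im} := fun w hw => by
    apply im_half
    simpa using hw
  have a1 := hf.analytic.analyticOnNhd ho
  have a2 := (hf.analytic.comp (g := f) (f := fun z : ℂ => z / 2) (by fun_prop) m1).analyticOnNhd ho
  have a3 := (hf.analytic.comp (g := f) (f := fun z : ℂ => (z + 1) / 2) (by fun_prop)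
    m2).analyticOnNhd ho
  rcases (a1.mul a2).eq_zero_or_eq_zero_of_mul_eq_zero a3 hN hconn with h | h
  · rcases a1.eq_zero_or_eq_zero_of_mul_eq_zero a2 h hconn with h | h
    · exact h z hz
    · have := h (2 * z) (by simpa using hz)
      simpa using this
  · have := h (2 * z - 1) (by simpa using hz)
    simpa using this

/-- Quasimodular form of weight two. -/
def RR : ℂ → ℂ := fun τ => (1 / 3) * (A2 τ + 2 * A2 (2 * τ))
/-- Modular form of weight two. -/
def PP : ℂ → ℂ := fun τ => 2 * A2 (2 * τ) - A2 τ
/-- Modular form of weight four, odd under Fricke. -/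
def WW : ℂ → ℂ := fun τ => (1 / 3) * (4 * A4 (2 * τ) - A4 τ)
/-- Modular form of weight four, even under Fricke. -/
def UU : ℂ → ℂ := fun τ => (1 / 5) * (4 * A4 (2 * τ) + A4 τ)

lemma QV.cast {f : ℂ → ℂ} {a b : ℂ} (hf : QV f a) (h : a = b) : QV f b := h ▸ hf

lemma RR_QV : QV RR 1 :=
  ((QV.const (1 / 3)).mul (A2_QV.add ((QV.const 2).mul A2_QV.two))).cast (by norm_num)
lemma PP_QV : QV PP 1 := (((QV.const 2).mul A2_QV.two).sub A2_QV).cast (by norm_num)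
lemma WW_QV : QV WW 1 :=
  ((QV.const (1 / 3)).mul (((QV.const 4).mul A4_QV.two).sub A4_QV)).cast (by norm_num)
lemma UU_QV : QV UU 1 :=
  ((QV.const (1 / 5)).mul (((QV.const 4).mul A4_QV.two).add A4_QV)).cast (by norm_num)

lemma A2_F1 {z : ℂ} (hz : 0 < z.im) : A2 (-1 / (2 * z)) =
    4 * z ^ 2 * A2 (2 * z) + 24 * (2 * Real.pi * Complex.I)⁻¹ * z := by
  rw [A2_S (by simpa using hz)]; ring

lemma A2_F2 {z : ℂ} (hz : 0 < z.im) : A2 (2 * (-1 / (2 * z))) =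
    z ^ 2 * A2 z + 12 * (2 * Real.pi * Complex.I)⁻¹ * z := by
  have hz0 : z ≠ 0 := by rintro rfl; simp at hz
  rw [show 2 * (-1 / (2 * z)) = -1 / z by field_simp, A2_S hz]

lemma A4_F1 {z : ℂ} (hz : 0 < z.im) : A4 (-1 / (2 * z)) = 16 * z ^ 4 * A4 (2 * z) := by
  rw [A4_S (by simpa using hz)]; ring

lemma A4_F2 {z : ℂ} (hz : 0 < z.im) : A4 (2 * (-1 / (2 * z))) = z ^ 4 * A4 z := by
  have hz0 : z ≠ 0 := by rintro rfl; simp at hz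
  rw [show 2 * (-1 / (2 * z)) = -1 / z by field_simp, A4_S hz]

lemma RR_F {z : ℂ} (hz : 0 < z.im) : RR (-1 / (2 * z)) =
    2 * z ^ 2 * RR z + 16 * (2 * Real.pi * Complex.I)⁻¹ * z := by
  simp only [RR]; rw [A2_F1 hz, A2_F2 hz]; ring

lemma PP_F {z : ℂ} (hz : 0 < z.im) : PP (-1 / (2 * z)) = -2 * z ^ 2 * PP z := by
  simp only [PP]; rw [A2_F1 hz, A2_F2 hz]; ring

lemma WW_F {z : ℂ} (hz : 0 < z.im) : WW (-1 / (2 * z)) = -4 * z ^ 4 * WW z := by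
  simp only [WW]; rw [A4_F1 hz, A4_F2 hz]; ring

lemma UU_F {z : ℂ} (hz : 0 < z.im) : UU (-1 / (2 * z)) = 4 * z ^ 4 * UU z := by
  simp only [UU]; rw [A4_F1 hz, A4_F2 hz]; ring

lemma nderiv_F {f g : ℂ → ℂ} {a d z : ℂ} (hf : QV f a) (hz : 0 < z.im)
    (hfg : ∀ w : ℂ, 0 < w.im → f (-1 / (2 * w)) = g w)
    (hg : HasDerivAt g (2 * Real.pi * Complex.I * d) z) :
    nderiv f (-1 / (2 * z)) = 2 * z ^ 2 * d := by
  have hz0 : z ≠ 0 := by rintro rfl; simp at hz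
  have hi : 0 < (-1 / (2 * z)).im := im_S (by simpa using hz)
  have h1 : HasDerivAt (fun w : ℂ => -1 / (2 * w)) (1 / (2 * z ^ 2)) z := by
    have := ((hasDerivAt_const z (-1 : ℂ)).div ((hasDerivAt_id z).const_mul 2)
      (mul_ne_zero two_ne_zero hz0))
    refine this.congr_deriv ?_
    simp only [id]
    field_simp
    ring
  have h2 : HasDerivAt (fun w : ℂ => f (-1 / (2 * w))) _ z := (hf.hasDerivAt hi).comp z h1
  have h3 : (fun w : ℂ => f (-1 / (2 * w))) =ᶠ[𝓝 z] g := by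
    filter_upwards [im_nhds hz] with w hw using hfg w hw
  have h4 := (h2.congr_of_eventuallyEq h3.symm).unique hg
  have := tpi_ne
  rw [mul_assoc] at h4
  have h5 := mul_left_cancel₀ this h4
  generalize nderiv f (-1 / (2 * z)) = X at *
  field_simp at h5
  linear_combination h5

lemma nRR_F {z : ℂ} (hz : 0 < z.im) : nderiv RR (-1 / (2 * z)) =
    4 * z ^ 4 * nderiv RR z + 8 * (2 * Real.pi * Complex.I)⁻¹ * z ^ 3 * RR z +
      32 * ((2 * Real.pi * Complex.I)⁻¹) ^ 2 * z ^ 2 := by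
  rw [nderiv_F RR_QV hz (fun w hw => RR_F hw) (d := 2 * z ^ 2 * nderiv RR z +
    4 * (2 * Real.pi * Complex.I)⁻¹ * z * RR z + 16 * ((2 * Real.pi * Complex.I)⁻¹) ^ 2)]
  · ring
  · have := (((hasDerivAt_pow 2 z).const_mul 2).mul (RR_QV.hasDerivAt hz)).add
      ((hasDerivAt_id z).const_mul (16 * (2 * Real.pi * Complex.I)⁻¹))
    refine this.congr_deriv ?_
    have h0 := tpi_ne
    generalize (2 * Real.pi * Complex.I : ℂ) = t at *
    field_simp
    push_cast
    ring

lemma nPP_F {z : ℂ} (hz : 0 < z.im) : nderiv PP (-1 / (2 * z)) =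
    -4 * z ^ 4 * nderiv PP z - 8 * (2 * Real.pi * Complex.I)⁻¹ * z ^ 3 * PP z := by
  rw [nderiv_F PP_QV hz (fun w hw => PP_F hw) (d := -2 * z ^ 2 * nderiv PP z -
    4 * (2 * Real.pi * Complex.I)⁻¹ * z * PP z)]
  · ring
  · have := (((hasDerivAt_pow 2 z).const_mul (-2)).mul (PP_QV.hasDerivAt hz))
    refine this.congr_deriv ?_
    have h0 := tpi_ne
    generalize (2 * Real.pi * Complex.I : ℂ) = t at *
    field_simp
    push_cast
    ring

lemma nWW_F {z : ℂ} (hz : 0 < z.im) : nderiv WW (-1 / (2 * z)) =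
    -8 * z ^ 6 * nderiv WW z - 32 * (2 * Real.pi * Complex.I)⁻¹ * z ^ 5 * WW z := by
  rw [nderiv_F WW_QV hz (fun w hw => WW_F hw) (d := -4 * z ^ 4 * nderiv WW z -
    16 * (2 * Real.pi * Complex.I)⁻¹ * z ^ 3 * WW z)]
  · ring
  · have := (((hasDerivAt_pow 4 z).const_mul (-4)).mul (WW_QV.hasDerivAt hz))
    refine this.congr_deriv ?_
    have h0 := tpi_ne
    generalize (2 * Real.pi * Complex.I : ℂ) = t at *
    field_simp
    push_cast
    ring

lemma UU_eq {z : ℂ} (hz : 0 < z.im) : UU z = PP z ^ 2 := by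
  have := fricke_zero (f := fun z => UU z - PP z * PP z) (k := 4) 4
    ((UU_QV.sub (PP_QV.mul PP_QV)).cast (by norm_num)) (by norm_num) (by norm_num)
    (fun w hw => by simp only [UU_F hw, PP_F hw]; ring) hz
  linear_combination this

lemma nRR {z : ℂ} (hz : 0 < z.im) : nderiv RR z = (RR z ^ 2 - PP z ^ 2) / 8 := by
  have := fricke_zero (f := fun z => nderiv RR z - (1 / 8) * (RR z * RR z - PP z * PP z)) (k := 4) 4
    ((RR_QV.nd.sub ((QV.const (1 / 8)).mul ((RR_QV.mul RR_QV).sub (PP_QV.mul PP_QV)))).cast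
      (by norm_num)) (by norm_num) (by norm_num)
    (fun w hw => by simp only [nRR_F hw, RR_F hw, PP_F hw]; ring) hz
  linear_combination this

lemma nPP {z : ℂ} (hz : 0 < z.im) : nderiv PP z = (RR z * PP z - WW z) / 4 := by
  have := fricke_zero (f := fun z => nderiv PP z - (1 / 4) * (RR z * PP z - WW z)) (k := 4) (-4)
    ((PP_QV.nd.sub ((QV.const (1 / 4)).mul ((RR_QV.mul PP_QV).sub WW_QV))).cast
      (by norm_num)) (by norm_num) (by norm_num)
    (fun w hw => by simp only [nPP_F hw, RR_F hw, PP_F hw, WW_F hw]; ring) hz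
  linear_combination this

lemma nWW {z : ℂ} (hz : 0 < z.im) : nderiv WW z = (RR z * WW z - PP z ^ 3) / 2 := by
  have := fricke_zero (f := fun z => nderiv WW z - (1 / 2) * (RR z * WW z - PP z * (PP z * PP z)))
    (k := 6) (-8)
    ((WW_QV.nd.sub ((QV.const (1 / 2)).mul ((RR_QV.mul WW_QV).sub
      (PP_QV.mul (PP_QV.mul PP_QV))))).cast
      (by norm_num)) (by norm_num) (by norm_num)
    (fun w hw => by simp only [nWW_F hw, RR_F hw, PP_F hw, WW_F hw]; ring) hz
  linear_combination this

lemma EDt_eq {z : ℂ} (hz : 0 < z.im) : EDt z = (PP z ^ 4 - WW z ^ 2) / 256 := by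
  have hP : EPt z = PP z := EPt_eq hz
  have hQ : EQ z = (WW z + PP z ^ 2) / 2 := by
    rw [EQ_eq hz, ← UU_eq hz]; simp only [UU, WW]; ring
  rw [EDt, ED, hP, hQ]; ring

lemma RR_d {z : ℂ} (hz : 0 < z.im) :
    HasDerivAt RR (2 * Real.pi * Complex.I * ((RR z ^ 2 - PP z ^ 2) / 8)) z :=
  (RR_QV.hasDerivAt hz).congr_deriv (by rw [nRR hz])

lemma PP_d {z : ℂ} (hz : 0 < z.im) :
    HasDerivAt PP (2 * Real.pi * Complex.I * ((RR z * PP z - WW z) / 4)) z :=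
  (PP_QV.hasDerivAt hz).congr_deriv (by rw [nPP hz])

lemma WW_d {z : ℂ} (hz : 0 < z.im) :
    HasDerivAt WW (2 * Real.pi * Complex.I * ((RR z * WW z - PP z ^ 3) / 2)) z :=
  (WW_QV.hasDerivAt hz).congr_deriv (by rw [nWW hz])

lemma nEDt {z : ℂ} (hz : 0 < z.im) :
    nderiv EDt z = RR z * ((PP z ^ 4 - WW z ^ 2) / 256) := by
  rw [nderiv_congr (fun w hw => EDt_eq hw) hz]
  apply nderiv_eq
  refine ((((PP_d hz).fun_pow 4).sub ((WW_d hz).fun_pow 2)).div_const 256).congr_deriv ?_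
  push_cast
  ring

lemma nnEDt {z : ℂ} (hz : 0 < z.im) : nderiv (nderiv EDt) z =
    (9 * RR z ^ 2 - PP z ^ 2) / 8 * ((PP z ^ 4 - WW z ^ 2) / 256) := by
  rw [nderiv_congr (fun w hw => nEDt hw) hz]
  apply nderiv_eq
  refine ((RR_d hz).mul
    ((((PP_d hz).fun_pow 4).sub ((WW_d hz).fun_pow 2)).div_const 256)).congr_deriv ?_
  simp only [Pi.sub_apply]
  push_cast
  ring

lemma nnnEDt {z : ℂ} (hz : 0 < z.im) : nderiv (nderiv (nderiv EDt)) z =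
    ((9 * RR z * ((RR z ^ 2 - PP z ^ 2) / 4) - PP z * (RR z * PP z - WW z) / 2) / 8 +
    (9 * RR z ^ 2 - PP z ^ 2) / 8 * RR z) * ((PP z ^ 4 - WW z ^ 2) / 256) := by
  rw [nderiv_congr (fun w hw => nnEDt hw) hz]
  apply nderiv_eq
  refine ((((((RR_d hz).fun_pow 2).const_mul 9).sub ((PP_d hz).fun_pow 2)).div_const 8).mul
    ((((PP_d hz).fun_pow 4).sub ((WW_d hz).fun_pow 2)).div_const 256)).congr_deriv ?_
  simp only [Pi.sub_apply]
  push_cast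
  ring
end helpers


/-- The weight-eight cusp form `𝒟̃` on `Γ₀(2)` satisfies a third-order nonlinear ODE. -/
theorem EDt_third_order_ODE :
    ∀ τ : ℂ, 0 < τ.im →
      16 * EDt τ ^ 4 * (nderiv (nderiv (nderiv EDt)) τ) ^ 2 -
      30 * EDt τ ^ 2 * nderiv EDt τ *
        (4 * EDt τ * nderiv (nderiv EDt) τ - 3 * (nderiv EDt τ) ^ 2) *
        nderiv (nderiv (nderiv EDt)) τ +
      32 * EDt τ ^ 3 * (nderiv (nderiv EDt) τ) ^ 3 +
      117 * EDt τ ^ 2 * (nderiv EDt τ) ^ 2 * (nderiv (nderiv EDt) τ) ^ 2 -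
      8 * EDt τ * (16 * EDt τ ^ 5 + 27 * (nderiv EDt τ) ^ 4) * nderiv (nderiv EDt) τ +
      81 * (nderiv EDt τ) ^ 6 + 144 * EDt τ ^ 5 * (nderiv EDt τ) ^ 2 = 0 := by
  intro τ h
  rw [nnnEDt h, nnEDt h, nEDt h, EDt_eq h]
  ring
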